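/- arXiv:1205.6256 — 2 statements merged into one kernel-verified Lean document; each statement's English description precedes it below -/
import Mathlib

section
/- Let CFG(G,O) be a chip firing game reaching a unique fixed point with configuration space the finite ULD lattice L, and let κ : M → V(G) × ℕ be the injective map sending each meet-irreducible m to (v, δ_{c'}(v)), where c ⋖ c' is any cover with 𝔪(c,c') = m and v is the vertex fired to pass from c to c'; write κ(m) = (κ(m)⁽¹⁾, κ(m)⁽²⁾). Then for every meet-irreducible m and every a ∈ 𝔏_m, the number of elements (v,n) of κ(M \ M_a) with v = κ(m)⁽¹⁾ is at most κ(m)⁽²⁾ − 1. -/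
open Classical

section CFGdefs

variable {V : Type*}

/-- Out-degree of a vertex in a directed multigraph with edge multiplicities `E`. -/
noncomputable def outDeg (E : V → V → ℕ) (v : V) : ℕ := ∑ᶠ u, E v u

/-- A vertex is a sink if all its outgoing edges are loops. -/
def IsSink (E : V → V → ℕ) (v : V) : Prop := outDeg E v = E v v

/-- A vertex is firable in configuration `c`. -/
def Firable (E : V → V → ℕ) (c : V → ℕ) (v : V) : Prop :=
  ¬ IsSink E v ∧ outDeg E v ≤ c v

/-- The result of firing vertex `v` in configuration `c`. -/
noncomputable def fire (E : V → V → ℕ) (c : V → ℕ) (v : V) : V → ℕ :=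
  fun u => if u = v then c v - outDeg E v + E v v else c u + E v u

/-- The configuration obtained by firing a list of vertices in order. -/
noncomputable def fireList (E : V → V → ℕ) : (V → ℕ) → List V → (V → ℕ)
  | c, [] => c
  | c, v :: l => fireList E (fire E c v) l

/-- A list of vertices is a valid firing sequence from `c`. -/
def ValidSeq (E : V → V → ℕ) : (V → ℕ) → List V → Prop
  | _, [] => True
  | c, v :: l => Firable E c v ∧ ValidSeq E (fire E c v) l

/-- `c'` is reachable from `c` by a finite sequence of firings. -/
def Reaches (E : V → V → ℕ) (c c' : V → ℕ) : Prop :=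
  ∃ l : List V, ValidSeq E c l ∧ fireList E c l = c'

/-- A configuration with no firable vertex. -/
def FixedPt (E : V → V → ℕ) (c : V → ℕ) : Prop := ∀ v, ¬ Firable E c v

/-- The chip firing game `CFG(G,O)` reaches a unique fixed point. -/
def ReachesUFP (E : V → V → ℕ) (O : V → ℕ) : Prop :=
  ∃ fp : V → ℕ, Reaches E O fp ∧ FixedPt E fp ∧ ∀ c, Reaches E O c → Reaches E c fp

/-- The game is simple: in every firing sequence from `O` to the fixed point,
each vertex fires at most once. -/
def SimpleCFG (E : V → V → ℕ) (O : V → ℕ) : Prop :=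
  ∀ l : List V, ValidSeq E O l → FixedPt E (fireList E O l) → l.Nodup

/-- Single firing step from `c` to `c'` by firing vertex `v`. -/
def FireStep (E : V → V → ℕ) (c : V → ℕ) (v : V) (c' : V → ℕ) : Prop :=
  Firable E c v ∧ fire E c v = c'

/-- The partial order `L` is order-isomorphic to the configuration space of
`CFG(G,O)` ordered by reachability. -/
def Generates (E : V → V → ℕ) (O : V → ℕ) (L : Type*) [PartialOrder L] : Prop :=
  ∃ f : L ≃ {c : V → ℕ // Reaches E O c},
    ∀ a b : L, a ≤ b ↔ Reaches E (f a).val (f b).val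

/-- The support graph is connected (as an undirected graph). -/
def ConnectedG (E : V → V → ℕ) : Prop :=
  ∀ u v : V, Relation.ReflTransGen (fun a b => 0 < E a b ∨ 0 < E b a) u v

/-- The support graph together with its initial data is an Abelian Sandpile Model. -/
def IsASM (E : V → V → ℕ) : Prop :=
  ConnectedG E ∧ ∃ s : V, IsSink E s ∧ (∀ v, IsSink E v → v = s) ∧
    ∀ v₁ v₂ : V, v₁ ≠ v₂ → v₁ ≠ s → v₂ ≠ s → E v₁ v₂ = E v₂ v₁

/-- The directed multigraph has no directed cycle. -/
def AcyclicG (E : V → V → ℕ) : Prop :=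
  ∀ v : V, ¬ Relation.TransGen (fun a b => 0 < E a b) v v

end CFGdefs

/-- `L` is generated by some chip firing game reaching a unique fixed point. -/
def MemLCFG (L : Type*) [PartialOrder L] : Prop :=
  ∃ (V : Type) (_ : Finite V) (E : V → V → ℕ) (O : V → ℕ),
    ReachesUFP E O ∧ Generates E O L

/-- `L` is generated by some Abelian Sandpile Model reaching a unique fixed point. -/
def MemLASM (L : Type*) [PartialOrder L] : Prop :=
  ∃ (V : Type) (_ : Finite V) (E : V → V → ℕ) (O : V → ℕ),
    IsASM E ∧ ReachesUFP E O ∧ Generates E O L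

section Latticedefs

variable {L : Type*} [Lattice L]

/-- `m` is meet-irreducible: it has exactly one upper cover. -/
def MeetIrred (m : L) : Prop := ∃! y, m ⋖ y

/-- `j` is join-irreducible: it has exactly one lower cover. -/
def JoinIrred (j : L) : Prop := ∃! y, y ⋖ j

/-- The set `M_x \ M_y` of meet-irreducibles above `x` but not above `y`. -/
def MsetDiff (x y : L) : Set L := {m | MeetIrred m ∧ x ≤ m ∧ ¬ y ≤ m}

/-- The set `M \ M_a` of meet-irreducibles not above `a`. -/
def MnotAbove (a : L) : Set L := {m | MeetIrred m ∧ ¬ a ≤ m}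

/-- `x⁺`: the join of all upper covers of `x`. -/
noncomputable def uplus [Fintype L] [OrderBot L] (x : L) : L :=
  Finset.univ.sup (fun y => if x ⋖ y then y else ⊥)

/-- `L` is upper locally distributive: for every `x ≠ ⊤` the interval `[x, x⁺]`
is isomorphic to a Boolean lattice (a hypercube). -/
def IsULD (L : Type*) [Lattice L] [Fintype L] [BoundedOrder L] : Prop :=
  ∀ x : L, x ≠ ⊤ → ∃ n : ℕ, Nonempty (↥(Set.Icc x (uplus x)) ≃o Set (Fin n))

/-- `𝔘_m`: the minimal elements of `{x : ∃ y, x ⋖ y and 𝔪(x,y) = m}`. -/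
def Uset (m : L) : Set L :=
  {x | Minimal (fun z => ∃ y, z ⋖ y ∧ MsetDiff z y = {m}) x}

/-- `𝔏_m`: the maximal elements of `{x : a ≰ x for every a ∈ 𝔘_m}`. -/
def Lset (m : L) : Set L :=
  {x | Maximal (fun z => ∀ a ∈ Uset m, ¬ a ≤ z) x}

/-- `(w, e)` is a (non-negative integer) solution of the system `E(m)`. -/
def SolvesE [OrderBot L] (m : L) (w : ℕ) (e : L → ℕ) : Prop :=
  (Uset m = {(⊥ : L)} → 1 ≤ w) ∧
  (Uset m ≠ {(⊥ : L)} →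
    (∀ a ∈ Lset m, (∑ᶠ x ∈ MnotAbove a, e x) < w) ∧
    (∀ a ∈ Uset m, w ≤ ∑ᶠ x ∈ MnotAbove a, e x))

/-- The system `E(m)` has a non-negative integer solution. -/
def HasSolE [OrderBot L] (m : L) : Prop := ∃ w e, SolvesE m w e

/-- The variable `e_{x,m}` occurs in the system `𝔈(m)`. -/
def VarOccurs [OrderBot L] (x m : L) : Prop :=
  MeetIrred m ∧ Uset m ≠ {(⊥ : L)} ∧ ∃ a ∈ Uset m ∪ Lset m, x ∈ MnotAbove a

/-- `(W, Ee)` is a non-negative integer solution of the system `Ω`. -/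
def SolvesOmega [OrderBot L] (W : L → ℕ) (Ee : L → L → ℕ) : Prop :=
  (∀ m : L, MeetIrred m → SolvesE m (W m) (fun x => Ee x m)) ∧
  (∀ m₁ m₂ : L, m₁ ≠ m₂ → VarOccurs m₁ m₂ → VarOccurs m₂ m₁ → Ee m₁ m₂ = Ee m₂ m₁)

/-- The edge relation of the directed graph `𝒢` on the meet-irreducibles. -/
def Gedge (m₁ m₂ : L) : Prop :=
  MeetIrred m₁ ∧ MeetIrred m₂ ∧ ∃ a ∈ Uset m₂, m₁ ∈ MnotAbove a

end Latticedefs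

/-- The system `Ω` has a non-negative integer solution. -/
def HasSolOmega (L : Type*) [Lattice L] [OrderBot L] : Prop :=
  ∃ W Ee, SolvesOmega (L := L) W Ee

/-- The directed graph `𝒢` on the meet-irreducibles is acyclic. -/
def GAcyclic (L : Type*) [Lattice L] : Prop :=
  ∀ m : L, ¬ Relation.TransGen (Gedge (L := L)) m m

/-!
By the exchange property of chip firing, shot-vectors embed the configuration lattice into the
multisets of vertices, the embedding preserves joins, and a cover adds one vertex. Let `m` be
meet-irreducible and let the cover above `m` fire `v` for the `n`-th time, so that `(v, n)` is
`κ m`. An element `x` not below `m` has `m ⊔ x` above that cover, so `x ≤ m` if and only if `x`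
fires `v` fewer than `n` times. In particular `(v, n)` determines `m`, and a cover `c ⋖ c'` has
only one meet-irreducible above `c` but not above `c'`.

Every `a ∈ 𝔏_m` lies below `m`: otherwise a cover of `a ⊓ m` below `a` is labelled by `m`, which
puts an element of `𝔘_m` below `a`. Hence `a` fires `v` fewer than `n` times, and a
meet-irreducible with label `(v, k)` that is not above `a` has `1 ≤ k < n`.
-/

section MultisetUnion

variable {α : Type*} {s t : Multiset α} {a : α}

theorem multiset_union_cons_of_count_lt (h : t.count a < s.count a) :
    s ∪ a ::ₘ t = s ∪ t := by
  ext b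
  rcases eq_or_ne b a with rfl | hb
  · simp only [Multiset.count_union, Multiset.count_cons_self]
    omega
  · simp only [Multiset.count_union, Multiset.count_cons_of_ne hb]

theorem multiset_union_cons_of_count_le (h : s.count a ≤ t.count a) :
    s ∪ a ::ₘ t = a ::ₘ (s ∪ t) := by
  ext b
  rcases eq_or_ne b a with rfl | hb
  · simp only [Multiset.count_union, Multiset.count_cons_self]
    omega
  · simp only [Multiset.count_union, Multiset.count_cons_of_ne hb]

end MultisetUnion

section FiringSequences

variable {V : Type*} {E : V → V → ℕ} {O c : V → ℕ} {l l' l₁ l₂ : List V}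

theorem validSeq_append :
    ValidSeq E c (l ++ l') ↔ ValidSeq E c l ∧ ValidSeq E (fireList E c l) l' := by
  induction l generalizing c with
  | nil => simp [ValidSeq, fireList]
  | cons v l ih => simp [ValidSeq, fireList, ih, and_assoc]

theorem fireList_append (E : V → V → ℕ) (c : V → ℕ) (l l' : List V) :
    fireList E c (l ++ l') = fireList E (fireList E c l) l' := by
  induction l generalizing c with
  | nil => rfl
  | cons _ _ ih => exact ih _

theorem fireList_add_count_mul_outDeg (hl : ValidSeq E c l) (u : V) :
    fireList E c l u + l.count u * outDeg E u =
      c u + ((l : Multiset V).map (E · u)).sum := by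
  induction l generalizing c with
  | nil => simp [fireList]
  | cons w l ih =>
    have hrest := ih hl.2
    have hchips : outDeg E w ≤ c w := hl.1.2
    simp only [Multiset.map_coe, Multiset.sum_coe, List.map_cons, List.sum_cons, fireList,
      fire] at hrest ⊢
    by_cases huw : u = w
    · subst huw
      simp only [if_true, List.count_cons_self, add_mul, one_mul] at hrest ⊢
      omega
    · simp only [if_neg huw, List.count_cons_of_ne (Ne.symm huw)] at hrest ⊢
      omega

theorem fireList_apply_le_of_coe_le (hl : ValidSeq E c l) (hl' : ValidSeq E c l')
    (hle : (l : Multiset V) ≤ l') {u : V} (hu : l.count u = l'.count u) :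
    fireList E c l u ≤ fireList E c l' u := by
  have h := fireList_add_count_mul_outDeg hl u
  have h' := fireList_add_count_mul_outDeg hl' u
  obtain ⟨t, ht⟩ := Multiset.le_iff_exists_add.1 hle
  rw [ht, Multiset.map_add, Multiset.sum_add] at h'
  rw [hu] at h
  omega

theorem fireList_eq_of_perm (hl : ValidSeq E c l) (hl' : ValidSeq E c l') (h : l.Perm l') :
    fireList E c l = fireList E c l' :=
  funext fun u => le_antisymm
    (fireList_apply_le_of_coe_le hl hl' (Multiset.coe_eq_coe.2 h).le (h.count_eq u))
    (fireList_apply_le_of_coe_le hl' hl (Multiset.coe_eq_coe.2 h).ge (h.count_eq u).symm)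

theorem exists_validSeq_append_coe_eq_union (h₁ : ValidSeq E c l₁) (h₂ : ValidSeq E c l₂) :
    ∃ l, ValidSeq E c (l₁ ++ l) ∧ ((l₁ ++ l : List V) : Multiset V) = ↑l₁ ∪ ↑l₂ := by
  induction l₂ using List.reverseRecOn with
  | nil => exact ⟨[], by simpa using h₁, by simp⟩
  | append_singleton l₂ w ih =>
    obtain ⟨h₂, hw, -⟩ := validSeq_append.1 h₂
    obtain ⟨l, hl, hunion⟩ := ih h₂
    have happend (t : List V) : ((t ++ [w] : List V) : Multiset V) = w ::ₘ ↑t :=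
      Multiset.coe_eq_coe.2 (List.perm_append_singleton w t)
    rw [happend]
    rcases lt_or_ge ((l₂ : Multiset V).count w) ((l₁ : Multiset V).count w) with hlt | hge
    · exact ⟨l, hl, hunion.trans (multiset_union_cons_of_count_lt hlt).symm⟩
    · have hcount : l₂.count w = (l₁ ++ l).count w := by
        rw [← Multiset.coe_count, ← Multiset.coe_count, hunion, Multiset.count_union,
          max_eq_right hge]
      have hfirable : Firable E (fireList E c (l₁ ++ l)) w :=
        ⟨hw.1, hw.2.trans <| fireList_apply_le_of_coe_le h₂ hl
          (hunion ▸ Multiset.le_union_right) hcount⟩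
      refine ⟨l ++ [w], ?_, ?_⟩ <;> rw [← List.append_assoc]
      · exact validSeq_append.2 ⟨hl, hfirable, trivial⟩
      · rw [happend, hunion, multiset_union_cons_of_count_le hge]

theorem coe_le_coe_of_fixedPt (hl : ValidSeq E c l) (hfix : FixedPt E (fireList E c l))
    (hl' : ValidSeq E c l') : (l' : Multiset V) ≤ l := by
  obtain ⟨t, ht, hunion⟩ := exists_validSeq_append_coe_eq_union hl hl'
  cases t with
  | nil =>
    rw [List.append_nil] at hunion
    exact hunion ▸ Multiset.le_union_right
  | cons w t => exact absurd (validSeq_append.1 ht).2.1 (hfix w)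

theorem perm_of_fireList_eq (hUFP : ReachesUFP E O) (hl : ValidSeq E O l)
    (hl' : ValidSeq E O l') (h : fireList E O l = fireList E O l') : l.Perm l' := by
  obtain ⟨fp, -, hfix, hreach⟩ := hUFP
  obtain ⟨p, hp, rfl⟩ := hreach _ ⟨l, hl, rfl⟩
  have hlp : ValidSeq E O (l ++ p) := validSeq_append.2 ⟨hl, hp⟩
  have hlp' : ValidSeq E O (l' ++ p) := validSeq_append.2 ⟨hl', h ▸ hp⟩
  have hperm : (l ++ p).Perm (l' ++ p) := Multiset.coe_eq_coe.1 <| le_antisymm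
    (coe_le_coe_of_fixedPt hlp' (by rwa [fireList_append, ← h]) hlp)
    (coe_le_coe_of_fixedPt hlp (by rwa [fireList_append]) hlp')
  exact (List.perm_append_right_iff p).1 hperm

theorem Reaches.exists_fireStep {c' : V → ℕ} (h : Reaches E c c') (hne : c ≠ c') :
    ∃ v d, FireStep E c v d ∧ Reaches E d c' := by
  obtain ⟨_ | ⟨v, t⟩, ht, htc'⟩ := h
  · exact absurd htc' hne
  · exact ⟨v, fire E c v, ⟨ht.1, rfl⟩, t, ht.2, htc'⟩

theorem FireStep.reaches {c' : V → ℕ} {v : V} (h : FireStep E c v c') : Reaches E c c' :=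
  ⟨[v], ⟨h.1, trivial⟩, h.2⟩

theorem Reaches.trans {c' c'' : V → ℕ} (h : Reaches E c c') (h' : Reaches E c' c'') :
    Reaches E c c'' := by
  obtain ⟨l, hl, rfl⟩ := h
  obtain ⟨l', hl', rfl⟩ := h'
  exact ⟨l ++ l', validSeq_append.2 ⟨hl, hl'⟩, fireList_append E c l l'⟩

end FiringSequences

section ShotVector

variable {V : Type*} {E : V → V → ℕ} {O : V → ℕ} {c c' : {c : V → ℕ // Reaches E O c}}

/-- The shot-vector of a configuration reachable from `O`, encoded as the multiset in which each
vertex occurs as often as it is fired. It is read off a chosen firing sequence; when the game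
reaches a unique fixed point the choice does not matter. -/
noncomputable def shotVector (c : {c : V → ℕ // Reaches E O c}) : Multiset V :=
  c.prop.choose

theorem shotVector_eq_coe (hUFP : ReachesUFP E O) {l : List V} (hl : ValidSeq E O l)
    (hlc : fireList E O l = c) : shotVector c = l :=
  have ⟨hs, hsc⟩ := c.prop.choose_spec
  Multiset.coe_eq_coe.2 (perm_of_fireList_eq hUFP hs hl (hsc.trans hlc.symm))

theorem shotVector_eq_cons_of_fireStep (hUFP : ReachesUFP E O) {v : V}
    (h : FireStep E c v c') : shotVector c' = v ::ₘ shotVector c := by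
  obtain ⟨l, hl, hlc⟩ := c.prop
  have hlv : ValidSeq E O (l ++ [v]) := validSeq_append.2 ⟨hl, hlc ▸ h.1, trivial⟩
  rw [shotVector_eq_coe hUFP hl hlc,
    shotVector_eq_coe hUFP hlv (by rw [fireList_append, hlc]; exact h.2), Multiset.cons_coe]
  exact Multiset.coe_eq_coe.2 (List.perm_append_singleton v l)

theorem exists_reaches_shotVector_eq_union (hUFP : ReachesUFP E O)
    (c c' : {c : V → ℕ // Reaches E O c}) :
    ∃ d : {d : V → ℕ // Reaches E O d},
      Reaches E c d ∧ shotVector d = shotVector c ∪ shotVector c' := by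
  obtain ⟨l, hl, hlc⟩ := c.prop
  obtain ⟨l', hl', hlc'⟩ := c'.prop
  obtain ⟨t, ht, hunion⟩ := exists_validSeq_append_coe_eq_union hl hl'
  have hreach : Reaches E c (fireList E c t) := ⟨t, hlc ▸ (validSeq_append.1 ht).2, rfl⟩
  refine ⟨⟨fireList E c t, c.prop.trans hreach⟩, hreach, ?_⟩
  rw [shotVector_eq_coe hUFP ht (by rw [fireList_append, hlc]), hunion,
    shotVector_eq_coe hUFP hl hlc, shotVector_eq_coe hUFP hl' hlc']

theorem shotVector_injective (hUFP : ReachesUFP E O) :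
    Function.Injective (shotVector (E := E) (O := O)) := by
  intro c c' h
  obtain ⟨l, hl, hlc⟩ := c.prop
  obtain ⟨l', hl', hlc'⟩ := c'.prop
  rw [shotVector_eq_coe hUFP hl hlc, shotVector_eq_coe hUFP hl' hlc', Multiset.coe_eq_coe] at h
  exact Subtype.ext (hlc ▸ hlc' ▸ fireList_eq_of_perm hl hl' h)

theorem shotVector_le_shotVector_iff (hUFP : ReachesUFP E O) :
    shotVector c ≤ shotVector c' ↔ Reaches E c c' := by
  constructor
  · intro hle
    obtain ⟨d, hd, hunion⟩ := exists_reaches_shotVector_eq_union hUFP c c'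
    rw [Multiset.eq_union_right hle] at hunion
    rwa [← shotVector_injective hUFP hunion]
  · rintro ⟨t, ht, htc'⟩
    obtain ⟨l, hl, hlc⟩ := c.prop
    have hlt : ValidSeq E O (l ++ t) := validSeq_append.2 ⟨hl, hlc ▸ ht⟩
    rw [shotVector_eq_coe hUFP hl hlc,
      shotVector_eq_coe hUFP hlt (by rw [fireList_append, hlc, htc']), ← Multiset.coe_add]
    exact Multiset.le_add_right _ _

end ShotVector

section MeetIrreducible

variable {L : Type*} [Lattice L] {m m' : L}

theorem MeetIrred.le_of_lt [IsStronglyAtomic L] (hm : MeetIrred m) (hcov : m ⋖ m') {x : L}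
    (hx : m < x) : m' ≤ x := by
  obtain ⟨z, hz, hzx⟩ := exists_covBy_le_of_lt hx
  exact hm.unique hcov hz ▸ hzx

theorem MeetIrred.msetDiff_eq_singleton [IsStronglyAtomic L] (hm : MeetIrred m) (hcov : m ⋖ m') :
    MsetDiff m m' = {m} := by
  ext y
  constructor
  · rintro ⟨-, hmy, hy⟩
    exact hmy.eq_of_not_lt (fun hlt => hy (hm.le_of_lt hcov hlt)) |>.symm
  · rintro rfl
    exact ⟨hm, le_rfl, hcov.lt.not_ge⟩

theorem le_of_mem_Lset [WellFoundedLT L]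
    (hdiff : ∀ c c' : L, c ⋖ c' → (MsetDiff c c').Subsingleton) (hm : MeetIrred m) {a : L}
    (ha : a ∈ Lset m) : a ≤ m := by
  by_contra ham
  obtain ⟨c', hcov, hc'a⟩ := exists_covBy_le_of_lt (inf_lt_left.2 ham)
  have hc'm : ¬ c' ≤ m := fun h => hcov.lt.not_ge (le_inf hc'a h)
  have hlabel : MsetDiff (a ⊓ m) c' = {m} :=
    (hdiff _ _ hcov).eq_singleton_of_mem ⟨hm, inf_le_right, hc'm⟩
  obtain ⟨u, hu, huU⟩ := exists_minimal_le_of_wellFoundedLT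
    (fun z => ∃ y, z ⋖ y ∧ MsetDiff z y = {m}) (a ⊓ m) ⟨c', hcov, hlabel⟩
  exact ha.1 u huU (hu.trans inf_le_left)

end MeetIrreducible

section Label

variable {V L : Type*} [Lattice L]

/-- For an embedding `δ` of a lattice by shot-vectors, `p = (v, n)` is the label of `m` if the
upper cover of `m` is obtained by firing `v`, and this is the `n`-th firing of `v`. For
meet-irreducible `m` this is the value of `κ` at `m`. -/
def IsLabel (δ : L → Multiset V) (m : L) (p : V × ℕ) : Prop :=
  ∃ m', m ⋖ m' ∧ δ m' = p.1 ::ₘ δ m ∧ p.2 = (δ m').count p.1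

variable {δ : L ↪o Multiset V} {m m' : L} {p : V × ℕ}

theorem IsLabel.snd_eq (hp : IsLabel δ m p) : p.2 = (δ m).count p.1 + 1 := by
  obtain ⟨m', -, hm', hcount⟩ := hp
  rw [hcount, hm', Multiset.count_cons_self]

theorem IsLabel.le_iff_count_lt [IsStronglyAtomic L] (hsup : ∀ x y, δ (x ⊔ y) ≤ δ x ∪ δ y)
    (hm : MeetIrred m) (hp : IsLabel δ m p) {x : L} : x ≤ m ↔ (δ x).count p.1 < p.2 := by
  constructor
  · intro hx
    rw [hp.snd_eq, Nat.lt_succ_iff]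
    exact Multiset.count_le_of_le _ (δ.monotone hx)
  · contrapose!
    intro hx
    obtain ⟨m', hcov, -, hcount⟩ := id hp
    have hm'_le : δ m' ≤ δ m ∪ δ x :=
      (δ.monotone (hm.le_of_lt hcov (left_lt_sup.2 hx))).trans (hsup m x)
    have hmax := Multiset.count_le_of_le p.1 hm'_le
    rw [Multiset.count_union, ← hcount] at hmax
    exact (le_max_iff.1 hmax).resolve_left (by rw [hp.snd_eq]; omega)

theorem IsLabel.eq [IsStronglyAtomic L] (hsup : ∀ x y, δ (x ⊔ y) ≤ δ x ∪ δ y)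
    (hm : MeetIrred m) (hp : IsLabel δ m p) (hm' : MeetIrred m') (hp' : IsLabel δ m' p) :
    m = m' :=
  eq_of_forall_le_iff fun _ => (hp.le_iff_count_lt hsup hm).trans
    (hp'.le_iff_count_lt hsup hm').symm

theorem IsLabel.eq_of_mem_msetDiff [IsStronglyAtomic L] (hsup : ∀ x y, δ (x ⊔ y) ≤ δ x ∪ δ y)
    (hp : IsLabel δ m p) {c c' : L} {v : V} (hc : δ c' = v ::ₘ δ c) (hm : m ∈ MsetDiff c c') :
    p = (v, (δ c').count v) := by
  have hlt := (hp.le_iff_count_lt hsup hm.1).1 hm.2.1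
  have hge := not_lt.1 (mt (hp.le_iff_count_lt hsup hm.1).2 hm.2.2)
  rw [hc, Multiset.count_cons] at hge
  have hv : p.1 = v := by
    by_contra hne
    rw [if_neg hne] at hge
    omega
  rw [if_pos hv] at hge
  refine Prod.ext hv ?_
  rw [hc, Multiset.count_cons_self, ← hv]
  omega

theorem subsingleton_msetDiff [IsStronglyAtomic L] (hsup : ∀ x y, δ (x ⊔ y) ≤ δ x ∪ δ y)
    (hcons : ∀ x y, x ⋖ y → ∃ v, δ y = v ::ₘ δ x) {c c' : L} (hcov : c ⋖ c') :
    (MsetDiff c c').Subsingleton := by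
  obtain ⟨v, hv⟩ := hcons c c' hcov
  have hlabel (x : L) (hx : x ∈ MsetDiff c c') : IsLabel δ x (v, (δ c').count v) := by
    obtain ⟨x', hx', -⟩ := hx.1
    obtain ⟨w, hw⟩ := hcons x x' hx'
    have hp : IsLabel δ x (w, (δ x').count w) := ⟨x', hx', hw, rfl⟩
    exact hp.eq_of_mem_msetDiff hsup hv hx ▸ hp
  exact fun x hx y hy => (hlabel x hx).eq hsup hx.1 hy.1 (hlabel y hy)

end Label

section ConfigurationLattice

variable {V L : Type*} {E : V → V → ℕ} {O : V → ℕ}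

/-- The embedding of a lattice generated by a chip firing game into the multisets of vertices
which maps each configuration to its shot-vector. -/
noncomputable def shotEmbedding [PartialOrder L] (hUFP : ReachesUFP E O)
    (f : L ≃ {c : V → ℕ // Reaches E O c})
    (hf : ∀ a b : L, a ≤ b ↔ Reaches E (f a).val (f b).val) : L ↪o Multiset V :=
  OrderEmbedding.ofMapLEIff (fun x => shotVector (f x)) fun a b =>
    (shotVector_le_shotVector_iff hUFP).trans (hf a b).symm

theorem exists_fireStep_of_covBy [PartialOrder L] (hUFP : ReachesUFP E O)
    (f : L ≃ {c : V → ℕ // Reaches E O c})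
    (hf : ∀ a b : L, a ≤ b ↔ Reaches E (f a).val (f b).val) {x y : L} (hxy : x ⋖ y) :
    ∃ v, FireStep E (f x).val v (f y).val := by
  obtain ⟨v, d, hstep, hdy⟩ := ((hf x y).1 hxy.le).exists_fireStep
    fun h => hxy.ne (f.injective (Subtype.ext h))
  obtain ⟨z, hz⟩ := f.surjective ⟨d, (f x).prop.trans hstep.reaches⟩
  have hzd : (f z).val = d := congrArg Subtype.val hz
  rw [← hzd] at hstep hdy
  have hxz : x < z := by
    refine (shotEmbedding hUFP f hf).lt_iff_lt.1 ?_
    exact (Multiset.lt_cons_self _ v).trans_eq (shotVector_eq_cons_of_fireStep hUFP hstep).symm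
  have hzy : z = y := ((hf z y).2 hdy).eq_of_not_lt (hxy.2 hxz)
  exact ⟨v, hzy ▸ hstep⟩

theorem shotEmbedding_eq_cons_of_covBy [PartialOrder L] (hUFP : ReachesUFP E O)
    (f : L ≃ {c : V → ℕ // Reaches E O c})
    (hf : ∀ a b : L, a ≤ b ↔ Reaches E (f a).val (f b).val) {x y : L} (hxy : x ⋖ y) :
    ∃ v, shotEmbedding hUFP f hf y = v ::ₘ shotEmbedding hUFP f hf x :=
  (exists_fireStep_of_covBy hUFP f hf hxy).imp fun _ => shotVector_eq_cons_of_fireStep hUFP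

theorem shotEmbedding_sup_le [Lattice L] (hUFP : ReachesUFP E O)
    (f : L ≃ {c : V → ℕ // Reaches E O c})
    (hf : ∀ a b : L, a ≤ b ↔ Reaches E (f a).val (f b).val) (x y : L) :
    shotEmbedding hUFP f hf (x ⊔ y) ≤ shotEmbedding hUFP f hf x ∪ shotEmbedding hUFP f hf y := by
  obtain ⟨d, -, hd⟩ := exists_reaches_shotVector_eq_union hUFP (f x) (f y)
  obtain ⟨z, rfl⟩ := f.surjective d
  set δ := shotEmbedding hUFP f hf
  change δ z = δ x ∪ δ y at hd
  have hxz : x ≤ z := δ.le_iff_le.1 (hd ▸ Multiset.le_union_left)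
  have hyz : y ≤ z := δ.le_iff_le.1 (hd ▸ Multiset.le_union_right)
  exact hd ▸ δ.monotone (sup_le hxz hyz)

theorem isLabel_of_forall_fireStep [Lattice L] [IsStronglyAtomic L] (hUFP : ReachesUFP E O)
    (f : L ≃ {c : V → ℕ // Reaches E O c})
    (hf : ∀ a b : L, a ≤ b ↔ Reaches E (f a).val (f b).val) {m : L} (hm : MeetIrred m)
    {p : V × ℕ}
    (hp : ∀ (c c' : L) (v : V) (l : List V), c ⋖ c' → MsetDiff c c' = {m} →
      FireStep E (f c).val v (f c').val → ValidSeq E O l → fireList E O l = (f c').val →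
      p = (v, l.count v)) :
    IsLabel (shotEmbedding hUFP f hf) m p := by
  obtain ⟨m', hcov, -⟩ := id hm
  obtain ⟨v, hstep⟩ := exists_fireStep_of_covBy hUFP f hf hcov
  obtain ⟨l, hl, hlm'⟩ := (f m').prop
  obtain rfl := hp m m' v l hcov (hm.msetDiff_eq_singleton hcov) hstep hl hlm'
  refine ⟨m', hcov, shotVector_eq_cons_of_fireStep hUFP hstep, ?_⟩
  change l.count v = (shotVector (f m')).count v
  rw [shotVector_eq_coe hUFP hl hlm', Multiset.coe_count]

end ConfigurationLattice

/-- For infinite `V`, a vertex of infinite out-degree has the junk value `outDeg = 0`. -/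
theorem stmt18_general {V : Type*} (E : V → V → ℕ) (O : V → ℕ)
    (hUFP : ReachesUFP E O) {L : Type*} [Lattice L]
    (f : L ≃ {c : V → ℕ // Reaches E O c})
    (hf : ∀ a b : L, a ≤ b ↔ Reaches E (f a).val (f b).val)
    (κ : {m : L // MeetIrred m} → V × ℕ)
    (hκ : ∀ (m : {m : L // MeetIrred m}) (c c' : L) (v : V) (l : List V),
      c ⋖ c' → MsetDiff c c' = {m.val} → FireStep E (f c).val v (f c').val →
      ValidSeq E O l → fireList E O l = (f c').val →
      κ m = (v, l.count v)) :
    ∀ (m : {m : L // MeetIrred m}) (a : L), a ∈ Lset m.val →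
      ((κ '' {x : {m : L // MeetIrred m} | ¬ a ≤ x.val}) ∩
        {p : V × ℕ | p.1 = (κ m).1}).ncard ≤ (κ m).2 - 1 := by
  intro m a ha
  set δ := shotEmbedding hUFP f hf
  have : WellFoundedLT L := δ.wellFoundedLT
  have hsup : ∀ x y, δ (x ⊔ y) ≤ δ x ∪ δ y := shotEmbedding_sup_le hUFP f hf
  have hlabel (x : {m : L // MeetIrred m}) : IsLabel δ x.val (κ x) :=
    isLabel_of_forall_fireStep hUFP f hf x.prop (hκ x)
  have ham : a ≤ m.val := le_of_mem_Lset
    (fun c c' => subsingleton_msetDiff hsup fun x y => shotEmbedding_eq_cons_of_covBy hUFP f hf)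
    m.prop ha
  have hcount : (δ a).count (κ m).1 < (κ m).2 :=
    ((hlabel m).le_iff_count_lt hsup m.prop).1 ham
  have hsub : (κ '' {x : {m : L // MeetIrred m} | ¬ a ≤ x.val}) ∩ {p : V × ℕ | p.1 = (κ m).1} ⊆
      Prod.mk (κ m).1 '' Set.Ioo 0 (κ m).2 := by
    rintro _ ⟨⟨x, hax, rfl⟩, hxm : (κ x).1 = (κ m).1⟩
    have hx : (κ x).2 ≤ (δ a).count (κ x).1 :=
      not_lt.1 (mt ((hlabel x).le_iff_count_lt hsup x.prop).2 hax)
    refine ⟨(κ x).2, ⟨(hlabel x).snd_eq ▸ Nat.succ_pos _, ?_⟩, Prod.ext hxm.symm rfl⟩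
    exact (hxm ▸ hx).trans_lt hcount
  calc _ ≤ (Prod.mk (κ m).1 '' Set.Ioo 0 (κ m).2).ncard :=
        Set.ncard_le_ncard hsub ((Set.finite_Ioo _ _).image _)
    _ ≤ (Set.Ioo 0 (κ m).2).ncard := Set.ncard_image_le (Set.finite_Ioo _ _)
    _ = (κ m).2 - 1 := by simp [Set.ncard_eq_toFinset_card']

/-- for a CFG reaching a unique fixed point generating the finite ULD
lattice `L`, with `κ : M → V × ℕ` the map sending each meet-irreducible `m` to the pair
(fired vertex, shot-vector value) of any cover labeled `m`: for every meet-irreducible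
`m` and every `a ∈ 𝔏_m`, the number of elements `(v,n)` of `κ(M \ M_a)` with
`v = κ(m)⁽¹⁾` is at most `κ(m)⁽²⁾ - 1`. -/
theorem stmt18 {V : Type*} [Finite V] (E : V → V → ℕ) (O : V → ℕ)
    (hUFP : ReachesUFP E O)
    {L : Type*} [Lattice L] [Fintype L] [BoundedOrder L] (hULD : IsULD L)
    (f : L ≃ {c : V → ℕ // Reaches E O c})
    (hf : ∀ a b : L, a ≤ b ↔ Reaches E (f a).val (f b).val)
    (κ : {m : L // MeetIrred m} → V × ℕ)
    (hκ : ∀ (m : {m : L // MeetIrred m}) (c c' : L) (v : V) (l : List V),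
      c ⋖ c' → MsetDiff c c' = {m.val} → FireStep E (f c).val v (f c').val →
      ValidSeq E O l → fireList E O l = (f c').val →
      κ m = (v, l.count v)) :
    ∀ (m : {m : L // MeetIrred m}) (a : L), a ∈ Lset m.val →
      ((κ '' {x : {m : L // MeetIrred m} | ¬ a ≤ x.val}) ∩
        {p : V × ℕ | p.1 = (κ m).1}).ncard ≤ (κ m).2 - 1 :=
  stmt18_general E O hUFP f hf κ hκ
end

section
/- Let CFG(G,O) be a chip firing game on an acyclic directed multigraph G reaching a unique fixed point, with configuration space the finite ULD lattice L, and let κ : M → V(G) × ℕ be the injective map sending each meet-irreducible m to (v, δ_{c'}(v)), where c ⋖ c' is any cover with 𝔪(c,c') = m and v is the vertex fired to pass from c to c'; write κ(m) = (κ(m)⁽¹⁾, κ(m)⁽²⁾). Then for every meet-irreducible m and every a ∈ 𝔘_m, the set {κ(x)⁽¹⁾ : x ∈ M \ M_a} is contained in the set of vertices of G from which there is a directed path (possibly of length zero) to κ(m)⁽¹⁾. -/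
open Classical

/-!
Record a valid firing sequence by the multiset of fired vertices, its shot-vector. A vertex that
can fire stays firable until it does, so the shot-vectors of valid sequences satisfy a greedoid
exchange property, hence are closed under unions. If a fixed point is reached, exchange makes its
shot-vector the largest one; it is therefore unique, and by cancellation so is the shot-vector of
every configuration that reaches the fixed point. Thus the configuration lattice becomes a family
of multisets, ordered by inclusion, in which joins are unions and covers add one vertex. If `y`
covers `x`, any two meet-irreducibles `m` and `m'` above `x` but not above `y` are maximal with this
property, so both equal `m ⊔ m'`, which is still not above `y`: a cover has at most one label.

Now let `a ∈ 𝔘_m`, and let the cover of `a` labelled by `m` fire `v`. Forgetting all firings at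
vertices without a path to `v` leaves a valid sequence, because such vertices send no chips to
those with a path. The truncated cover lies below the original one, so it is still labelled by `m`,
and minimality of `a` shows that nothing was forgotten: every vertex fired on the way to `a` has a
path to `v`. A meet-irreducible not above `a` is the label of one of these firings.
-/

section MultisetOrder

variable {V : Type*} {s t : Multiset V} {v : V}

theorem cons_le_iff_count_lt (h : s ≤ t) : v ::ₘ s ≤ t ↔ s.count v < t.count v := by
  refine ⟨fun hv => ?_, fun hv => Multiset.le_iff_count.2 fun u => ?_⟩
  · simpa only [Multiset.count_cons_self, Nat.succ_le_iff] using Multiset.count_le_of_le v hv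
  · have := Multiset.count_le_of_le u h
    rw [Multiset.count_cons]
    split_ifs with huv
    · exact huv ▸ hv
    · exact this

theorem count_eq_of_not_cons_le (h : s ≤ t) (hv : ¬ v ::ₘ s ≤ t) : s.count v = t.count v :=
  (Multiset.count_le_of_le v h).antisymm (not_lt.1 fun hlt => hv ((cons_le_iff_count_lt h).2 hlt))

theorem sup_cons_of_not_cons_le (h : s ≤ t) (hv : ¬ v ::ₘ s ≤ t) :
    t ⊔ (v ::ₘ s) = v ::ₘ t := by
  have hcount := count_eq_of_not_cons_le h hv
  ext u
  have := Multiset.count_le_of_le u h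
  rw [Multiset.sup_eq_union, Multiset.count_union, Multiset.count_cons, Multiset.count_cons]
  split_ifs with huv
  · subst huv
    omega
  · omega

end MultisetOrder

section ShotVector

variable {V : Type*} {E : V → V → ℕ} {c d e : V → ℕ} {s t : Multiset V} {v : V}

theorem Reaches.head (h : FireStep E c v d) (hde : Reaches E d e) : Reaches E c e := by
  obtain ⟨hv, rfl⟩ := h
  obtain ⟨l, hl, hle⟩ := hde
  exact ⟨v :: l, ⟨hv, hl⟩, hle⟩

theorem reaches_iff_reflTransGen :
    Reaches E c d ↔ Relation.ReflTransGen (fun c d => ∃ v, FireStep E c v d) c d := by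
  constructor
  · rintro ⟨l, hl, rfl⟩
    induction l generalizing c with
    | nil => exact .refl
    | cons v l ih => exact .head ⟨v, hl.1, rfl⟩ (ih hl.2)
  · intro h
    induction h using Relation.ReflTransGen.head_induction_on with
    | refl => exact ⟨[], trivial, rfl⟩
    | head hstep _ ih => exact hstep.elim fun _ hv => ih.head hv

/-- `IsShotVector E c s d` says that some valid firing sequence from `c` to `d` fires each vertex
as often as it occurs in `s`. Shot-vectors are encoded as multisets, so that they have finite
support even when `V` is infinite. -/
inductive IsShotVector (E : V → V → ℕ) (c : V → ℕ) : Multiset V → (V → ℕ) → Prop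
  | zero : IsShotVector E c 0 c
  | cons {s : Multiset V} {d e : V → ℕ} {v : V} :
      IsShotVector E c s d → FireStep E d v e → IsShotVector E c (v ::ₘ s) e

theorem reaches_iff_exists_isShotVector : Reaches E c d ↔ ∃ s, IsShotVector E c s d := by
  rw [reaches_iff_reflTransGen]
  constructor
  · intro h
    induction h with
    | refl => exact ⟨0, .zero⟩
    | tail _ hstep ih =>
      obtain ⟨s, hs⟩ := ih
      exact hstep.elim fun v hv => ⟨v ::ₘ s, hs.cons hv⟩
  · rintro ⟨s, hs⟩
    induction hs with
    | zero => exact .refl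
    | cons _ hv ih => exact ih.tail ⟨_, hv⟩

namespace IsShotVector

theorem exists_cons_eq (hs : IsShotVector E c s d) (h0 : s ≠ 0) :
    ∃ e v t, IsShotVector E c t e ∧ v ::ₘ t = s := by
  cases hs with
  | zero => exact absurd rfl h0
  | cons ht _ => exact ⟨_, _, _, ht, rfl⟩

theorem trans (hs : IsShotVector E c s d) (ht : IsShotVector E d t e) :
    IsShotVector E c (s + t) e := by
  induction ht with
  | zero => simpa only [add_zero] using hs
  | cons _ hv ih => simpa only [Multiset.add_cons] using ih.cons hv

theorem apply_add_count_mul_outDeg (h : IsShotVector E c s d) (u : V) :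
    d u + s.count u * outDeg E u = c u + (s.map (E · u)).sum := by
  induction h with
  | zero => simp only [Multiset.count_zero, zero_mul, Multiset.map_zero, Multiset.sum_zero]
  | @cons s d _ v _ hstep ih =>
    obtain ⟨⟨-, hdeg⟩, rfl⟩ := hstep
    rw [Multiset.map_cons, Multiset.sum_cons]
    by_cases huv : u = v
    · subst huv
      rw [Multiset.count_cons_self, add_mul, fire, if_pos rfl]
      omega
    · rw [Multiset.count_cons_of_ne huv, fire, if_neg huv]
      omega

theorem right_unique (hd : IsShotVector E c s d) (he : IsShotVector E c s e) : d = e :=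
  funext fun u => Nat.add_right_cancel <|
    (hd.apply_add_count_mul_outDeg u).trans (he.apply_add_count_mul_outDeg u).symm

theorem apply_le_apply (hs : IsShotVector E c s d) (ht : IsShotVector E c t e) (hst : s ≤ t)
    (hv : s.count v = t.count v) : d v ≤ e v := by
  have hd := hs.apply_add_count_mul_outDeg v
  have he := ht.apply_add_count_mul_outDeg v
  have hsum : (s.map (E · v)).sum ≤ (t.map (E · v)).sum := by
    obtain ⟨r, rfl⟩ := Multiset.le_iff_exists_add.1 hst
    rw [Multiset.map_add, Multiset.sum_add]
    exact Nat.le_add_right _ _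
  rw [hv] at hd
  omega

theorem exists_firable_of_not_le (hs : IsShotVector E c s d) (ht : IsShotVector E c t e)
    (hts : ¬ t ≤ s) : ∃ v, Firable E d v ∧ v ::ₘ s ≤ s ⊔ t := by
  induction ht with
  | zero => exact absurd (Multiset.zero_le s) hts
  | @cons t e _ v ht hv ih =>
    by_cases hle : t ≤ s
    · have hcount := count_eq_of_not_cons_le hle hts
      exact ⟨v, ⟨hv.1.1, hv.1.2.trans (ht.apply_le_apply hs hle hcount)⟩,
        (sup_cons_of_not_cons_le hle hts).ge⟩
    · obtain ⟨w, hw, hle⟩ := ih hle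
      exact ⟨w, hw, hle.trans (sup_le_sup_left (Multiset.le_cons_self t v) s)⟩

theorem exists_sup (hs : IsShotVector E c s d) (ht : IsShotVector E c t e) :
    ∃ g, IsShotVector E c (s ⊔ t) g ∧ Reaches E d g := by
  induction hn : (t - s).card using Nat.strong_induction_on generalizing s d with
  | _ n ih =>
    by_cases hts : t ≤ s
    · rw [sup_eq_left.2 hts]
      exact ⟨d, hs, [], trivial, rfl⟩
    · obtain ⟨v, hv, hle⟩ := hs.exists_firable_of_not_le ht hts
      have hsv : s ≤ v ::ₘ s := Multiset.le_cons_self s v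
      have hcount : s.count v < t.count v := by
        simpa using (cons_le_iff_count_lt le_sup_left).1 hle
      have hcard : (t - v ::ₘ s).card < n := by
        rw [← hn, ← Multiset.singleton_add, add_comm, tsub_add_eq_tsub_tsub,
          Multiset.sub_singleton]
        exact Multiset.card_erase_lt_of_mem (Multiset.mem_sub.2 hcount)
      have hsup : (v ::ₘ s) ⊔ t = s ⊔ t :=
        (sup_le hle le_sup_right).antisymm (sup_le_sup_right hsv t)
      obtain ⟨g, hg, hdg⟩ := ih _ hcard (hs.cons ⟨hv, rfl⟩) rfl
      exact ⟨g, hsup ▸ hg, hdg.head ⟨hv, rfl⟩⟩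

theorem reaches_of_le (hs : IsShotVector E c s d) (ht : IsShotVector E c t e) (hst : s ≤ t) :
    Reaches E d e := by
  obtain ⟨g, hg, hdg⟩ := hs.exists_sup ht
  rw [sup_eq_right.2 hst] at hg
  exact hg.right_unique ht ▸ hdg

theorem fireStep_of_cons (hs : IsShotVector E c s d) (ht : IsShotVector E c (v ::ₘ s) e) :
    FireStep E d v e := by
  have hlt := Multiset.lt_cons_self s v
  obtain ⟨w, hw, hle⟩ := hs.exists_firable_of_not_le ht hlt.not_ge
  rw [sup_eq_right.2 hlt.le] at hle
  obtain rfl : w = v := (Multiset.cons_inj_left s).1 <|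
    Multiset.eq_of_le_of_card_le hle (by rw [Multiset.card_cons, Multiset.card_cons])
  exact ⟨hw, (hs.cons ⟨hw, rfl⟩).right_unique ht⟩

theorem le_of_fixedPt (hs : IsShotVector E c s d) (ht : IsShotVector E c t e)
    (he : FixedPt E e) : s ≤ t := by
  by_contra hst
  obtain ⟨v, hv, -⟩ := ht.exists_firable_of_not_le hs hst
  exact he v hv

theorem left_unique (hc : ReachesUFP E c) (hs : IsShotVector E c s d)
    (ht : IsShotVector E c t d) : s = t := by
  obtain ⟨p, -, hp, hreach⟩ := hc
  obtain ⟨r, hr⟩ :=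
    reaches_iff_exists_isShotVector.1 (hreach d (reaches_iff_exists_isShotVector.2 ⟨s, hs⟩))
  have hsr := hs.trans hr
  have htr := ht.trans hr
  exact add_right_cancel ((hsr.le_of_fixedPt htr hp).antisymm (htr.le_of_fixedPt hsr hp))

theorem filter {P : V → Prop} (hP : ∀ u w, 0 < E u w → P w → P u) (hs : IsShotVector E c s d) :
    ∃ d', IsShotVector E c (s.filter P) d' ∧ ∀ u, P u → d' u = d u := by
  induction hs with
  | zero => exact ⟨c, .zero, fun _ _ => rfl⟩
  | @cons s d _ v _ hstep ih =>
    obtain ⟨⟨hsink, hdeg⟩, rfl⟩ := hstep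
    obtain ⟨d', hd', heq⟩ := ih
    by_cases hv : P v
    · rw [Multiset.filter_cons_of_pos s hv]
      refine ⟨fire E d' v, hd'.cons ⟨⟨hsink, (heq v hv).symm ▸ hdeg⟩, rfl⟩, fun u hu => ?_⟩
      rw [fire, fire, heq u hu, heq v hv]
    · rw [Multiset.filter_cons_of_neg s hv]
      refine ⟨d', hd', fun u hu => ?_⟩
      have huv : u ≠ v := fun h => hv (h ▸ hu)
      have hE : E v u = 0 := Nat.eq_zero_of_not_pos fun h => hv (hP v u h hu)
      rw [fire, if_neg huv, hE, add_zero, heq u hu]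

end IsShotVector

end ShotVector

section Antimatroid

variable {V L : Type*}

/-- Order embeddings onto antimatroids with repetition: families of multisets closed under unions
and such that some element can be removed from each nonempty member. -/
structure IsAntimatroidEmbedding [SemilatticeSup L] (δ : L ↪o Multiset V) : Prop where
  map_sup (x y : L) : δ (x ⊔ y) = δ x ⊔ δ y
  exists_cons_eq (y : L) : δ y ≠ 0 → ∃ x v, v ::ₘ δ x = δ y

theorem covBy_of_cons_eq [PartialOrder L] {δ : L ↪o Multiset V} {x y : L} {v : V}
    (h : v ::ₘ δ x = δ y) : x ⋖ y :=
  CovBy.of_image δ (h ▸ Multiset.covBy_cons _ _)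

namespace IsAntimatroidEmbedding

section SemilatticeSup

variable [SemilatticeSup L] {δ : L ↪o Multiset V} {x y z : L} {v : V}

theorem apply_sup_of_cons_eq (hδ : IsAntimatroidEmbedding δ) (h : v ::ₘ δ x = δ y) (hxz : x ≤ z)
    (hyz : ¬ y ≤ z) : δ (z ⊔ y) = v ::ₘ δ z := by
  rw [← δ.le_iff_le, ← h] at hyz
  rw [hδ.map_sup, ← h, sup_cons_of_not_cons_le (δ.monotone hxz) hyz]

theorem exists_cons_eq_of_not_le (hδ : IsAntimatroidEmbedding δ) (h : ¬ y ≤ x) :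
    ∃ c c' v, v ::ₘ δ c = δ c' ∧ c ≤ x ∧ ¬ c' ≤ x ∧ c' ≤ y := by
  induction hn : (δ y).card generalizing y with
  | zero =>
    rw [← δ.le_iff_le, Multiset.card_eq_zero.1 hn] at h
    exact absurd (Multiset.zero_le _) h
  | succ n ih =>
    obtain ⟨z, v, hzy⟩ := hδ.exists_cons_eq y fun h0 => by simp [h0] at hn
    by_cases hzx : z ≤ x
    · exact ⟨z, y, v, hzy, hzx, h, le_rfl⟩
    · obtain ⟨c, c', w, hcc', hcx, hc'x, hc'z⟩ := ih hzx (by simpa [← hzy] using hn)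
      exact ⟨c, c', w, hcc', hcx, hc'x, hc'z.trans (covBy_of_cons_eq hzy).le⟩

theorem exists_cons_eq_of_covBy (hδ : IsAntimatroidEmbedding δ) (h : x ⋖ y) :
    ∃ v, v ::ₘ δ x = δ y := by
  obtain ⟨c, c', v, hcc', hcx, hc'x, hc'y⟩ := hδ.exists_cons_eq_of_not_le h.lt.not_ge
  have hsup : x ⊔ c' = y := (h.eq_or_eq le_sup_left (sup_le h.le hc'y)).resolve_left
    fun he => hc'x (sup_eq_left.1 he)
  exact ⟨v, by rw [← hsup, hδ.apply_sup_of_cons_eq hcc' hcx hc'x]⟩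

theorem not_le_sup (hδ : IsAntimatroidEmbedding δ) {w : L} (h : v ::ₘ δ x = δ y) (hxz : x ≤ z)
    (hxw : x ≤ w) (hyz : ¬ y ≤ z) (hyw : ¬ y ≤ w) : ¬ y ≤ z ⊔ w := by
  rw [← δ.le_iff_le, ← h] at hyz hyw ⊢
  have hz := count_eq_of_not_cons_le (δ.monotone hxz) hyz
  have hw := count_eq_of_not_cons_le (δ.monotone hxw) hyw
  rw [cons_le_iff_count_lt (δ.monotone (hxz.trans le_sup_left)), hδ.map_sup,
    Multiset.sup_eq_union, Multiset.count_union, ← hz, ← hw, max_self]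
  exact lt_irrefl _

end SemilatticeSup

section Lattice

variable [Lattice L] {δ : L ↪o Multiset V} {x y x' y' m n : L} {v : V}

theorem le_of_meetIrred_lt (hδ : IsAntimatroidEmbedding δ) (hm : MeetIrred m)
    (h : v ::ₘ δ x = δ y) (hxm : x ≤ m) (hym : ¬ y ≤ m) (hmn : m < n) : y ≤ n := by
  obtain ⟨c, c', w, hcc', hcm, hc'm, hc'n⟩ := hδ.exists_cons_eq_of_not_le hmn.not_ge
  have hcov : m ⋖ m ⊔ c' := covBy_of_cons_eq (hδ.apply_sup_of_cons_eq hcc' hcm hc'm).symm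
  have hcov' : m ⋖ m ⊔ y := covBy_of_cons_eq (hδ.apply_sup_of_cons_eq h hxm hym).symm
  calc
    y ≤ m ⊔ y := le_sup_right
    _ = m ⊔ c' := hm.unique hcov' hcov
    _ ≤ n := sup_le hmn.le hc'n

theorem msetDiff_subsingleton (hδ : IsAntimatroidEmbedding δ) (h : v ::ₘ δ x = δ y) :
    (MsetDiff x y).Subsingleton := by
  rintro m ⟨hm, hxm, hym⟩ m' ⟨hm', hxm', hym'⟩
  have hy : ¬ y ≤ m ⊔ m' := hδ.not_le_sup h hxm hxm' hym hym'
  have hmeq : m = m ⊔ m' := le_sup_left.eq_of_not_lt fun hlt =>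
    hy (hδ.le_of_meetIrred_lt hm h hxm hym hlt)
  have hmeq' : m' = m ⊔ m' := le_sup_right.eq_of_not_lt fun hlt =>
    hy (hδ.le_of_meetIrred_lt hm' h hxm' hym' hlt)
  exact hmeq.trans hmeq'.symm

theorem msetDiff_eq_singleton (hδ : IsAntimatroidEmbedding δ) (h : v ::ₘ δ x = δ y)
    (hm : m ∈ MsetDiff x y) : MsetDiff x y = {m} :=
  (hδ.msetDiff_subsingleton h).eq_singleton_of_mem hm

theorem le_of_mem_uset (hδ : IsAntimatroidEmbedding δ) (hx : x ∈ Uset m) (h : v ::ₘ δ x = δ y)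
    (hm : m ∈ MsetDiff x y) (h' : v ::ₘ δ x' = δ y') (hx'x : x' ≤ x) (hy'x : ¬ y' ≤ x) :
    x ≤ x' := by
  have hsup : x ⊔ y' = y := δ.injective ((hδ.apply_sup_of_cons_eq h' hx'x hy'x).trans h)
  have hm' : m ∈ MsetDiff x' y' :=
    ⟨hm.1, hx'x.trans hm.2.1, fun hy'm => hm.2.2 (hsup ▸ sup_le hm.2.1 hy'm)⟩
  exact (Set.mem_ofPred.1 hx).le_of_le
    ⟨y', covBy_of_cons_eq h', hδ.msetDiff_eq_singleton h' hm'⟩ hx'x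

end Lattice

end IsAntimatroidEmbedding

end Antimatroid

section ConfigurationSpace

variable {V : Type*} {E : V → V → ℕ} {O : V → ℕ} {L : Type*}
  {f : L ≃ {c : V → ℕ // Reaches E O c}}

theorem exists_orderEmbedding_isShotVector [PartialOrder L] (hO : ReachesUFP E O)
    (hf : ∀ a b : L, a ≤ b ↔ Reaches E (f a).val (f b).val) :
    ∃ δ : L ↪o Multiset V, ∀ x, IsShotVector E O (δ x) (f x).val := by
  choose δ hδ using fun x => reaches_iff_exists_isShotVector.1 (f x).2
  refine ⟨.ofMapLEIff δ fun x y => ⟨fun h => (hf x y).2 ((hδ x).reaches_of_le (hδ y) h), ?_⟩, hδ⟩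
  intro hxy
  obtain ⟨r, hr⟩ := reaches_iff_exists_isShotVector.1 ((hf x y).1 hxy)
  rw [(hδ y).left_unique hO ((hδ x).trans hr)]
  exact Multiset.le_add_right _ _

theorem exists_eq_of_isShotVector {δ : L → Multiset V} (hO : ReachesUFP E O)
    (hδ : ∀ x, IsShotVector E O (δ x) (f x).val) {s : Multiset V} {d : V → ℕ}
    (hs : IsShotVector E O s d) : ∃ x, δ x = s := by
  obtain ⟨x, hx⟩ := f.surjective ⟨d, reaches_iff_exists_isShotVector.2 ⟨s, hs⟩⟩
  have := hδ x
  rw [hx] at this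
  exact ⟨x, this.left_unique hO hs⟩

theorem isAntimatroidEmbedding_of_isShotVector [SemilatticeSup L] {δ : L ↪o Multiset V}
    (hO : ReachesUFP E O) (hδ : ∀ x, IsShotVector E O (δ x) (f x).val) :
    IsAntimatroidEmbedding δ where
  map_sup x y := by
    obtain ⟨d, hd, -⟩ := (hδ x).exists_sup (hδ y)
    obtain ⟨z, hz⟩ := exists_eq_of_isShotVector hO hδ hd
    have hxz : x ≤ z := δ.le_iff_le.1 (hz ▸ le_sup_left)
    have hyz : y ≤ z := δ.le_iff_le.1 (hz ▸ le_sup_right)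
    refine le_antisymm (hz ▸ δ.monotone (sup_le hxz hyz)) ?_
    exact sup_le (δ.monotone le_sup_left) (δ.monotone le_sup_right)
  exists_cons_eq y hy := by
    obtain ⟨_, v, s, hs, hsy⟩ := (hδ y).exists_cons_eq hy
    obtain ⟨x, rfl⟩ := exists_eq_of_isShotVector hO hδ hs
    exact ⟨x, v, hsy⟩

theorem reflTransGen_of_mem_of_mem_uset [Lattice L] {δ : L ↪o Multiset V} (hO : ReachesUFP E O)
    (hδ : ∀ x, IsShotVector E O (δ x) (f x).val) {m a b : L} {v w : V} (ha : a ∈ Uset m)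
    (hab : v ::ₘ δ a = δ b) (hm : m ∈ MsetDiff a b) (hw : w ∈ δ a) :
    Relation.ReflTransGen (fun u v => 0 < E u v) w v := by
  have hanti := isAntimatroidEmbedding_of_isShotVector hO hδ
  let P : V → Prop := fun u => Relation.ReflTransGen (fun u v => 0 < E u v) u v
  have hP : ∀ u w, 0 < E u w → P w → P u := fun _ _ huw hw => .head huw hw
  have hPv : P v := .refl
  obtain ⟨_, hda, -⟩ := (hδ a).filter hP
  obtain ⟨_, hdb, -⟩ := (hδ b).filter hP
  obtain ⟨a', ha'⟩ := exists_eq_of_isShotVector hO hδ hda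
  obtain ⟨b', hb'⟩ := exists_eq_of_isShotVector hO hδ hdb
  have hab' : v ::ₘ δ a' = δ b' := by
    rw [ha', hb', ← hab, Multiset.filter_cons_of_pos _ hPv]
  have ha'a : a' ≤ a := δ.le_iff_le.1 (ha' ▸ Multiset.filter_le P _)
  have hb'a : ¬ b' ≤ a := by
    rw [← δ.le_iff_le, ← hab', cons_le_iff_count_lt (δ.monotone ha'a), ha',
      Multiset.count_filter_of_pos hPv]
    exact lt_irrefl _
  have haa' : a ≤ a' := hanti.le_of_mem_uset ha hab hm hab' ha'a hb'a
  have hwa' : w ∈ (δ a).filter P := ha' ▸ Multiset.mem_of_le (δ.monotone haa') hw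
  exact (Multiset.mem_filter.1 hwa').2

end ConfigurationSpace

-- In an infinite graph `outDeg` is `0` at a vertex with infinitely many out-neighbours: such a
-- vertex never fires, unless it has a loop, in which case there is no fixed point.
theorem stmt19_general {V : Type*} (E : V → V → ℕ) (O : V → ℕ) (hUFP : ReachesUFP E O)
    {L : Type*} [Lattice L] (f : L ≃ {c : V → ℕ // Reaches E O c})
    (hf : ∀ a b : L, a ≤ b ↔ Reaches E (f a).val (f b).val)
    (κ : {m : L // MeetIrred m} → V × ℕ)
    (hκ : ∀ (m : {m : L // MeetIrred m}) (c c' : L) (v : V) (l : List V),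
      c ⋖ c' → MsetDiff c c' = {m.val} → FireStep E (f c).val v (f c').val →
      ValidSeq E O l → fireList E O l = (f c').val →
      κ m = (v, l.count v)) :
    ∀ (m : {m : L // MeetIrred m}) (a : L), a ∈ Uset m.val →
      ∀ x : {m : L // MeetIrred m}, ¬ a ≤ x.val →
        Relation.ReflTransGen (fun u v : V => 0 < E u v) (κ x).1 (κ m).1 := by
  obtain ⟨δ, hδ⟩ := exists_orderEmbedding_isShotVector hUFP hf
  have hanti := isAntimatroidEmbedding_of_isShotVector hUFP hδ
  have fst_κ {p : {m : L // MeetIrred m}} {c c' : L} {v : V} (h : v ::ₘ δ c = δ c')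
      (hp : p.val ∈ MsetDiff c c') : (κ p).1 = v := by
    obtain ⟨l, hl, hl'⟩ := (f c').2
    have hstep : FireStep E (f c).val v (f c').val := (hδ c).fireStep_of_cons (h ▸ hδ c')
    rw [hκ p c c' v l (covBy_of_cons_eq h) (hanti.msetDiff_eq_singleton h hp) hstep hl hl']
  intro m a ha x hax
  obtain ⟨b, hab, hm⟩ := (Set.mem_ofPred.1 ha).prop
  have hm' : m.val ∈ MsetDiff a b := hm ▸ Set.mem_singleton _
  obtain ⟨v, hv⟩ := hanti.exists_cons_eq_of_covBy hab
  obtain ⟨c, c', w, hw, hcx, hc'x, hc'a⟩ := hanti.exists_cons_eq_of_not_le hax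
  have hwa : w ∈ δ a :=
    Multiset.mem_of_le (δ.monotone hc'a) (hw ▸ Multiset.mem_cons_self w _)
  rw [fst_κ hw ⟨x.2, hcx, hc'x⟩, fst_κ hv hm']
  exact reflTransGen_of_mem_of_mem_uset hUFP hδ ha hv hm' hwa

/-- for a CFG on an acyclic directed multigraph reaching a unique fixed
point generating the finite ULD lattice `L`, with `κ : M → V × ℕ` as above: for every
meet-irreducible `m` and every `a ∈ 𝔘_m`, every vertex `κ(x)⁽¹⁾` with `x ∈ M \ M_a`
admits a directed path (possibly of length zero) to `κ(m)⁽¹⁾` in `G`. -/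
theorem stmt19 {V : Type*} [Finite V] (E : V → V → ℕ) (O : V → ℕ)
    (hacyc : AcyclicG E) (hUFP : ReachesUFP E O)
    {L : Type*} [Lattice L] [Fintype L] [BoundedOrder L] (hULD : IsULD L)
    (f : L ≃ {c : V → ℕ // Reaches E O c})
    (hf : ∀ a b : L, a ≤ b ↔ Reaches E (f a).val (f b).val)
    (κ : {m : L // MeetIrred m} → V × ℕ)
    (hκ : ∀ (m : {m : L // MeetIrred m}) (c c' : L) (v : V) (l : List V),
      c ⋖ c' → MsetDiff c c' = {m.val} → FireStep E (f c).val v (f c').val →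
      ValidSeq E O l → fireList E O l = (f c').val →
      κ m = (v, l.count v)) :
    ∀ (m : {m : L // MeetIrred m}) (a : L), a ∈ Uset m.val →
      ∀ x : {m : L // MeetIrred m}, ¬ a ≤ x.val →
        Relation.ReflTransGen (fun u v : V => 0 < E u v) (κ x).1 (κ m).1 :=
  stmt19_general E O hUFP f hf κ hκ
end
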